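/- Let θ ∈ (0,1), α > 0, t₀ > 0, γ ∈ [1,2] and m ∈ (0, 2γ/(γ+2)). Set Γ(t) = (α/(1−θ))(t^{1−θ} − t₀^{1−θ}) (so that Γ(t) = ∫_{t₀}^t α s^{−θ} ds). Let x : [t₀, ∞) → ℝⁿ be a solution of the perturbed inertial ODE with damping α/t^θ. Assume that ∫_{t₀}^∞ e^{mΓ(t)} ‖g(t)‖ dt < ∞ and that F satisfies hypotheses H1(γ) and H2(2) and admits a unique minimizer x*. Then there exist C > 0 and t₁ ≥ t₀ such that for all t ≥ t₁, F(x(t)) − F* ≤ C · e^{−mΓ(t)}. -/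

import Mathlib

open MeasureTheory
open scoped RealInnerProductSpace

/-- Gronwall type bound. -/
theorem gron_aux (U U' h : ℝ → ℝ) (T : ℝ)
    (hU : ∀ t ∈ Set.Ici T, HasDerivAt U (U' t) t)
    (hpos : ∀ t ∈ Set.Ici T, 0 < U t)
    (hc : ContinuousOn h (Set.Ici T)) (hi : IntegrableOn h (Set.Ici T))
    (h0 : ∀ t ∈ Set.Ici T, 0 ≤ h t)
    (hle : ∀ t ∈ Set.Ici T, U' t ≤ h t * U t) :
    ∃ M > 0, ∀ t ≥ T, U t ≤ M := by
  set k : ℝ → ℝ := fun t => h (max T t) with hk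
  have kc : Continuous k := by
    have : ContinuousOn k Set.univ := hc.comp (by fun_prop) (fun t _ => le_max_left T t)
    simpa [continuousOn_univ] using this
  have keq : ∀ t ∈ Set.Ici T, k t = h t := fun t ht => by
    simp only [hk]; rw [max_eq_right ht]
  set H : ℝ → ℝ := fun t => ∫ s in T..t, k s with hH
  have dH : ∀ t, HasDerivAt H (k t) t := fun t =>
    intervalIntegral.integral_hasDerivAt_right (kc.intervalIntegrable _ _)
      (kc.stronglyMeasurableAtFilter _ _) kc.continuousAt
  set I := ∫ s in Set.Ici T, h s with hI
  have Hle : ∀ t ≥ T, H t ≤ I := by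
    intro t ht
    have e1 : H t = ∫ s in Set.Ioc T t, h s := by
      simp only [hH]
      rw [intervalIntegral.integral_of_le ht]
      apply setIntegral_congr_fun measurableSet_Ioc
      intro s hs
      exact keq s hs.1.le
    rw [e1]
    apply setIntegral_mono_set hi
    · filter_upwards [ae_restrict_mem measurableSet_Ici] with s hs
      exact h0 s hs
    · have hss : Set.Ioc T t ⊆ Set.Ici T := fun s hs => le_of_lt hs.1
      exact hss.eventuallyLE
  have dQ : ∀ t ∈ Set.Ici T, HasDerivAt (fun t => U t * Real.exp (-H t))
      (U' t * Real.exp (-H t) + U t * (Real.exp (-H t) * (-k t))) t := fun t ht =>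
    (hU t ht).mul ((dH t).neg.exp)
  have anti : AntitoneOn (fun t => U t * Real.exp (-H t)) (Set.Ici T) := by
    apply antitoneOn_of_deriv_nonpos (convex_Ici T)
    · exact fun t ht => (dQ t ht).continuousAt.continuousWithinAt
    · intro t ht
      exact (dQ t (interior_subset ht)).differentiableAt.differentiableWithinAt
    · intro t ht
      have ht' := interior_subset ht
      rw [(dQ t ht').deriv, keq t ht']
      have := hle t ht'
      have e := Real.exp_pos (-H t)
      nlinarith
  refine ⟨U T * Real.exp I, mul_pos (hpos T (by simp)) (Real.exp_pos _), fun t ht => ?_⟩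
  have h1 := anti (Set.mem_Ici.2 le_rfl) (Set.mem_Ici.2 ht) ht
  have hT : H T = 0 := by simp [hH]
  simp only [hT, neg_zero, Real.exp_zero, mul_one] at h1
  have h2 : U t = (U t * Real.exp (-H t)) * Real.exp (H t) := by
    rw [mul_assoc, ← Real.exp_add]; simp
  rw [h2]
  exact mul_le_mul h1 (Real.exp_le_exp.2 (Hle t ht)) (Real.exp_pos _).le (hpos T (by simp)).le

section aux
variable {E : Type*} [NormedAddCommGroup E] [InnerProductSpace ℝ E] [CompleteSpace E]

theorem grad_ineq (F : E → ℝ) (hconv : ConvexOn ℝ Set.univ F) (hdiff : Differentiable ℝ F)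
    (y z : E) : F y - F z ≤ ⟪gradient F y, y - z⟫ := by
  set L : ℝ →ᵃ[ℝ] E := AffineMap.lineMap z y
  have hc : ConvexOn ℝ Set.univ (F ∘ L) := by
    have := hconv.comp_affineMap L
    simpa using this
  have hL : HasDerivAt (fun s : ℝ => L s) (y - z) 1 := AffineMap.hasDerivAt_lineMap
  have hL1 : L 1 = y := AffineMap.lineMap_apply_one z y
  have hL0 : L 0 = z := AffineMap.lineMap_apply_zero z y
  have hd : HasDerivAt (F ∘ L) ⟪gradient F y, y - z⟫ 1 := by
    have h1 := (hdiff y).hasGradientAt.hasFDerivAt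
    rw [← hL1] at h1
    have := h1.comp_hasDerivAt (1:ℝ) hL
    rw [hL1] at this
    simpa [InnerProductSpace.toDual_apply_apply] using this
  have := hc.slope_le_of_hasDerivAt (Set.mem_univ 0) (Set.mem_univ 1) one_pos hd
  simpa [slope_def_field, hL1, hL0] using this

set_option maxHeartbeats 2000000 in
theorem alg_aux (f p v ip G K δ μ γ m a b e : ℝ) (hK : 0 < K) (ha : 0 < a) (hb : 0 ≤ b)
    (hp : 0 ≤ p) (hv : 0 ≤ v) (hip : |ip| ≤ p * v)
    (hf : K * p ^ 2 ≤ f) (hG : γ * f ≤ G) (hμ0 : 0 < μ) (hμ1 : μ ≤ 1) (hm0 : 0 < m) (hm1 : m ≤ 1)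
    (e1 : μ * γ = m + δ) (e2 : μ = 1 - m / 2 - δ / 2) (hδ : 0 < δ)
    (he : e = 3 * a + b + a ^ 2) (he1 : e ≤ δ) (he2 : e ≤ δ * K / 2) :
    -(μ * a) * G + (μ - 1) * a * v ^ 2 + (μ * a * (μ * a - a) - μ * a * b) * ip
      - (μ * a) ^ 2 * b * p ^ 2
      + m * a * (f + 1 / 2 * (v ^ 2 + 2 * (μ * a) * ip + (μ * a) ^ 2 * p ^ 2)) ≤ 0 := by
  have hs : |μ * (μ * a - a) - μ * b + m * μ * a| ≤ e := by
    have h1 : μ * a ≤ a := by nlinarith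
    have h1' : 0 < μ * a := by positivity
    have h2 : μ * b ≤ b := by nlinarith
    have h2' : 0 ≤ μ * b := by positivity
    have h3 : m * (μ * a) ≤ a := by nlinarith
    have h3' : 0 < m * (μ * a) := by positivity
    have h4 : μ * (μ * a) ≤ a := by nlinarith
    have h4' : 0 < μ * (μ * a) := by positivity
    rw [abs_le]
    constructor <;> nlinarith [sq_nonneg a]
  have he0 : 0 < e := by rw [he]; positivity
  have hc : (μ * (μ * a - a) - μ * b + m * μ * a) * ip ≤ e * (p * v) := by
    calc _ ≤ |(μ * (μ * a - a) - μ * b + m * μ * a) * ip| := le_abs_self _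
      _ = |μ * (μ * a - a) - μ * b + m * μ * a| * |ip| := abs_mul _ _
      _ ≤ e * (p * v) := mul_le_mul hs hip (abs_nonneg _) he0.le
  have hc2 : e * (p * v) ≤ e / 2 * p ^ 2 + e / 2 * v ^ 2 := by
    nlinarith [mul_nonneg he0.le (sq_nonneg (p - v))]
  have hq : m * (μ ^ 2 * a ^ 2) / 2 * p ^ 2 ≤ e / 2 * p ^ 2 := by
    have : m * (μ ^ 2 * a ^ 2) ≤ e := by
      have h1 : μ ^ 2 ≤ 1 := by nlinarith
      have h2 : μ ^ 2 * a ^ 2 ≤ a ^ 2 := by nlinarith [sq_nonneg a]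
      have h3 : m * (μ ^ 2 * a ^ 2) ≤ μ ^ 2 * a ^ 2 := by
        nlinarith [mul_nonneg (sq_nonneg μ) (sq_nonneg a)]
      linarith
    nlinarith [sq_nonneg p]
  have hfin : e * p ^ 2 ≤ δ * f / 2 := by
    nlinarith [sq_nonneg p]
  have hev : e / 2 * v ^ 2 ≤ δ / 2 * v ^ 2 := by nlinarith [sq_nonneg v]
  have hGG : -μ * G ≤ -(m + δ) * f := by rw [← e1]; nlinarith
  have hbp : 0 ≤ μ ^ 2 * a * b * p ^ 2 := by positivity
  have hf0 : 0 ≤ δ * f := mul_nonneg hδ.le (le_trans (by positivity) hf)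
  have key : -μ * G + (μ - 1) * v ^ 2 + (μ * (μ * a - a) - μ * b + m * μ * a) * ip
      - μ ^ 2 * a * b * p ^ 2 + m * f + m / 2 * v ^ 2 + m * (μ ^ 2 * a ^ 2) / 2 * p ^ 2 ≤ 0 := by
    have hv2 : (μ - 1) * v ^ 2 + m / 2 * v ^ 2 = - (δ / 2) * v ^ 2 := by rw [e2]; ring
    linarith
  have hfinal := mul_nonneg ha.le (neg_nonneg.2 key)
  linarith

theorem core_aux (F : E → ℝ) (Fs : ℝ) (xs : E) (hdiff : Differentiable ℝ F)
    (α t₀ θ γ m : ℝ) (hα : 0 < α) (ht₀ : 0 < t₀) (hθ : 0 < θ) (hθ1 : θ < 1)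
    (hγ : 1 ≤ γ) (hγ2 : γ ≤ 2) (hm : 0 < m) (hm2 : m < 2 * γ / (γ + 2))
    (Γ : ℝ → ℝ) (hΓ : ∀ t, Γ t = (α / (1 - θ)) * (t ^ (1 - θ) - t₀ ^ (1 - θ)))
    (g x x' x'' : ℝ → E)
    (hg : ContinuousOn g (Set.Ici t₀))
    (hx : ∀ t ∈ Set.Ici t₀, HasDerivAt x (x' t) t)
    (hx'd : ∀ t ∈ Set.Ici t₀, HasDerivAt x' (x'' t) t)
    (hode : ∀ t ∈ Set.Ici t₀, x'' t + (α / t ^ θ) • x' t + gradient F (x t) = g t)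
    (K T : ℝ) (hK : 0 < K) (hT : t₀ ≤ T)
    (h1 : ∀ t ≥ T, γ * (F (x t) - Fs) ≤ ⟪gradient F (x t), x t - xs⟫)
    (h2 : ∀ t ≥ T, K * ‖x t - xs‖ ^ 2 ≤ F (x t) - Fs)
    (hint : IntegrableOn (fun t : ℝ => Real.exp (m * Γ t) * ‖g t‖) (Set.Ici t₀)) :
    ∃ C > 0, ∃ t₁ ≥ t₀, ∀ t ≥ t₁,
      F (x t) - Fs ≤ C * Real.exp (-(m * Γ t)) := by
  set δ := 2 * γ / (γ + 2) - m with hδ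
  have hδ0 : 0 < δ := by linarith
  set μ := 2 / (γ + 2) with hμ
  have hγ3 : (0:ℝ) < γ + 2 := by linarith
  have hμ0 : 0 < μ := by positivity
  have hμ1 : μ ≤ 1 := by rw [hμ, div_le_one hγ3]; linarith
  have e1 : μ * γ = m + δ := by rw [hμ, hδ]; ring
  have e2 : μ = 1 - m / 2 - δ / 2 := by rw [hμ, hδ]; field_simp; ring
  have hm1 : m ≤ 1 := by
    have : 2 * γ / (γ + 2) ≤ 1 := by rw [div_le_one hγ3]; linarith
    linarith
  -- smallness
  set a : ℝ → ℝ := fun t => α / t ^ θ with ha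
  have lim_a : Filter.Tendsto a Filter.atTop (nhds 0) :=
    (tendsto_rpow_atTop hθ).const_div_atTop α
  have lim_e : Filter.Tendsto (fun t => 3 * a t + θ / t + a t ^ 2) Filter.atTop (nhds 0) := by
    have := ((lim_a.const_mul 3).add (Filter.tendsto_id.const_div_atTop θ)).add (lim_a.pow 2)
    simpa using this
  have hmin : 0 < min δ (δ * K / 2) := lt_min hδ0 (by positivity)
  obtain ⟨T1, hT1⟩ := Filter.eventually_atTop.1 (lim_e.eventually (gt_mem_nhds hmin))
  set S := max T T1 with hS
  have hSt : ∀ t ∈ Set.Ici S, t₀ ≤ t ∧ T ≤ t ∧ T1 ≤ t := fun t ht =>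
    ⟨hT.trans ((le_max_left _ _).trans ht), (le_max_left _ _).trans ht, (le_max_right _ _).trans ht⟩
  have dΓ : ∀ t, 0 < t → HasDerivAt Γ (a t) t := by
    intro t ht
    have h := (((Real.hasDerivAt_rpow_const (p := 1 - θ) (Or.inl ht.ne')).sub_const
      (t₀ ^ (1 - θ))).const_mul (α / (1 - θ)))
    have hfun : Γ = fun t => (α / (1 - θ)) * (t ^ (1 - θ) - t₀ ^ (1 - θ)) := funext hΓ
    rw [hfun]
    refine h.congr_deriv ?_
    have : (1 - θ) ≠ 0 := by linarith
    rw [show 1 - θ - 1 = -θ by ring, Real.rpow_neg ht.le]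
    simp only [ha]
    field_simp
  have da : ∀ t, 0 < t → HasDerivAt a (-(a t * (θ / t))) t := by
    intro t ht
    have h := (Real.hasDerivAt_rpow_const (p := -θ) (Or.inl ht.ne')).const_mul α
    have : a =ᶠ[nhds t] fun t => α * t ^ (-θ) := by
      filter_upwards [lt_mem_nhds ht] with s hs
      simp only [ha]
      rw [Real.rpow_neg hs.le]; rfl
    refine (h.congr_of_eventuallyEq this).congr_deriv ?_
    rw [Real.rpow_sub_one ht.ne', Real.rpow_neg ht.le]
    simp only [ha]
    field_simp
  -- Lyapunov function
  set w : ℝ → E := fun t => x' t + (μ * a t) • (x t - xs) with hw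
  set V : ℝ → ℝ := fun t => F (x t) - Fs + 1 / 2 * ‖w t‖ ^ 2 with hV
  set w' : ℝ → E := fun t => x'' t + ((μ * a t) • x' t + (μ * -(a t * (θ / t))) • (x t - xs)) with hw'
  set V' : ℝ → ℝ := fun t => ⟪gradient F (x t), x' t⟫ + 1 / 2 * (2 * ⟪w t, w' t⟫) with hV'
  have dw : ∀ t ∈ Set.Ici t₀, HasDerivAt w (w' t) t := fun t ht => by
    have htp : 0 < t := lt_of_lt_of_le ht₀ ht
    exact (hx'd t ht).add (((da t htp).const_mul μ).smul ((hx t ht).sub_const xs))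
  have dV : ∀ t ∈ Set.Ici t₀, HasDerivAt V (V' t) t := fun t ht => by
    have hF := (hdiff (x t)).hasGradientAt.hasFDerivAt.comp_hasDerivAt t (hx t ht)
    have hF' : HasDerivAt (fun s => F (x s)) ⟪gradient F (x t), x' t⟫ t := by
      simpa [InnerProductSpace.toDual_apply_apply, Function.comp_def] using hF
    exact (hF'.sub_const Fs).add ((dw t ht).norm_sq.const_mul (1 / 2))
  have main : ∀ t ∈ Set.Ici S, V' t + m * a t * V t ≤ ⟪w t, g t⟫ := by
    intro t ht
    obtain ⟨ht0, htT, htT1⟩ := hSt t ht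
    have htp : 0 < t := lt_of_lt_of_le ht₀ ht0
    have hat : 0 < a t := by simp only [ha]; positivity
    have hsm := (hT1 t htT1)
    have hd := alg_aux (F (x t) - Fs) ‖x t - xs‖ ‖x' t‖ ⟪x t - xs, x' t⟫
      ⟪gradient F (x t), x t - xs⟫ K δ μ γ m (a t) (θ / t) _ hK hat (by positivity)
      (norm_nonneg _) (norm_nonneg _) (abs_real_inner_le_norm _ _) (h2 t htT) (h1 t htT)
      hμ0 hμ1 hm hm1 e1 e2 hδ0 rfl (hsm.le.trans (min_le_left _ _))
      (hsm.le.trans (min_le_right _ _))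
    have hx2 : x'' t = g t - (a t) • x' t - gradient F (x t) := by
      rw [← hode t ht0]; simp only [ha]; abel
    have hwn : ‖w t‖ ^ 2 = ‖x' t‖ ^ 2 + 2 * (μ * a t) * ⟪x t - xs, x' t⟫
        + (μ * a t) ^ 2 * ‖x t - xs‖ ^ 2 := by
      simp only [hw]
      rw [norm_add_sq_real, norm_smul, inner_smul_right, mul_pow, Real.norm_eq_abs, sq_abs,
        real_inner_comm (x t - xs) (x' t)]
      ring
    have hww : ⟪w t, w' t⟫ = ⟪w t, g t⟫ - ⟪gradient F (x t), x' t⟫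
        - (μ * a t) * ⟪gradient F (x t), x t - xs⟫ + (μ - 1) * a t * ‖x' t‖ ^ 2
        + (μ * a t * (μ * a t - a t) - μ * a t * (θ / t)) * ⟪x t - xs, x' t⟫
        - (μ * a t) ^ 2 * (θ / t) * ‖x t - xs‖ ^ 2 := by
      simp only [hw', hx2]
      simp only [hw]
      generalize x t - xs = φ
      simp only [inner_add_left, inner_add_right, inner_sub_right, inner_smul_left,
        inner_smul_right, RCLike.conj_to_real, ← real_inner_self_eq_norm_sq]
      rw [real_inner_comm φ (x' t), real_inner_comm (gradient F (x t)) φ,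
        real_inner_comm (gradient F (x t)) (x' t)]
      ring
    simp only [hV', hV, hwn, hww]
    linarith
  have hf0 : ∀ t ≥ T, 0 ≤ F (x t) - Fs := fun t ht => le_trans (by positivity) (h2 t ht)
  have Γ0 : ∀ t ≥ t₀, 0 ≤ Γ t := by
    intro t ht
    rw [hΓ]
    have := Real.rpow_le_rpow ht₀.le ht (by linarith : 0 ≤ 1 - θ)
    have h3 : 0 < 1 - θ := by linarith
    exact mul_nonneg (by positivity) (by linarith)
  set U : ℝ → ℝ := fun t => 1 + Real.exp (m * Γ t) * V t with hU
  have sub : Set.Ici S ⊆ Set.Ici t₀ := fun t ht => (hSt t ht).1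
  have hVn : ∀ t ∈ Set.Ici S, 1 / 2 * ‖w t‖ ^ 2 ≤ V t := fun t ht => by
    have := hf0 t (hSt t ht).2.1
    simp only [hV]; linarith
  have dU : ∀ t ∈ Set.Ici S, HasDerivAt U
      (Real.exp (m * Γ t) * (m * a t) * V t + Real.exp (m * Γ t) * V' t) t := fun t ht => by
    have htp : 0 < t := lt_of_lt_of_le ht₀ (sub ht)
    exact ((((dΓ t htp).const_mul m).exp).mul (dV t (sub ht))).const_add 1
  have Γc : ContinuousOn Γ (Set.Ici t₀) := fun t ht =>
    (dΓ t (lt_of_lt_of_le ht₀ ht)).continuousAt.continuousWithinAt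
  obtain ⟨M, hM, hUM⟩ := gron_aux U _ (fun t : ℝ => Real.exp (m * Γ t) * ‖g t‖) S dU
    (fun t ht => by
      have := hVn t ht
      have h3 : 0 ≤ V t := le_trans (by positivity) this
      simp only [hU]; positivity)
    ((((Γc.const_mul m).rexp).mul hg.norm).mono sub)
    (hint.mono_set sub) (fun t ht => by positivity)
    (fun t ht => by
      have hma := main t ht
      have hin := real_inner_le_norm (w t) (g t)
      have hv := hVn t ht
      have hV0 : 0 ≤ V t := le_trans (by positivity) hv
      have hex : 1 ≤ Real.exp (m * Γ t) := Real.one_le_exp (mul_nonneg hm.le (Γ0 t (sub ht)))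
      have hwU : ‖w t‖ ≤ U t := by
        have : V t ≤ Real.exp (m * Γ t) * V t := by nlinarith
        simp only [hU]
        nlinarith [sq_nonneg (‖w t‖ - 1)]
      calc _ = Real.exp (m * Γ t) * (V' t + m * a t * V t) := by ring
        _ ≤ Real.exp (m * Γ t) * (‖w t‖ * ‖g t‖) :=
          mul_le_mul_of_nonneg_left (hma.trans hin) (by positivity)
        _ ≤ Real.exp (m * Γ t) * (U t * ‖g t‖) := by gcongr
        _ = _ := by ring)
  refine ⟨M, hM, S, sub (Set.mem_Ici.2 le_rfl), fun t ht => ?_⟩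
  have h3 := hUM t ht
  have h4 : F (x t) - Fs ≤ V t := by simp only [hV]; nlinarith [sq_nonneg ‖w t‖]
  have h5 : V t = (Real.exp (m * Γ t) * V t) * Real.exp (-(m * Γ t)) := by
    rw [mul_comm (Real.exp (m * Γ t)), mul_assoc, ← Real.exp_add]; simp
  have h6 : Real.exp (m * Γ t) * V t ≤ M := by simp only [hU] at h3; linarith
  calc _ ≤ V t := h4
    _ = _ := h5
    _ ≤ _ := mul_le_mul_of_nonneg_right h6 (Real.exp_pos _).le

/-- Boundedness of the values along the trajectory. -/
theorem energy_aux (F : E → ℝ) (Fs : ℝ) (hdiff : Differentiable ℝ F) (hmin : ∀ y, Fs ≤ F y)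
    (α t₀ θ : ℝ) (hα : 0 < α) (ht₀ : 0 < t₀)
    (g x x' x'' : ℝ → E)
    (hg : ContinuousOn g (Set.Ici t₀))
    (hx : ∀ t ∈ Set.Ici t₀, HasDerivAt x (x' t) t)
    (hx'd : ∀ t ∈ Set.Ici t₀, HasDerivAt x' (x'' t) t)
    (hode : ∀ t ∈ Set.Ici t₀, x'' t + (α / t ^ θ) • x' t + gradient F (x t) = g t)
    (hint : IntegrableOn (fun t : ℝ => ‖g t‖) (Set.Ici t₀)) :
    ∃ M > 0, ∀ t ≥ t₀, F (x t) - Fs ≤ M := by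
  set U : ℝ → ℝ := fun t => 1 + (F (x t) - Fs + 1 / 2 * ‖x' t‖ ^ 2) with hU
  have hUn : ∀ t, 1 + 1 / 2 * ‖x' t‖ ^ 2 ≤ U t := fun t => by
    have := hmin (x t); simp only [hU]; linarith
  have dU : ∀ t ∈ Set.Ici t₀, HasDerivAt U
      (⟪gradient F (x t), x' t⟫ + 1 / 2 * (2 * ⟪x' t, x'' t⟫)) t := fun t ht => by
    have hF := (hdiff (x t)).hasGradientAt.hasFDerivAt.comp_hasDerivAt t (hx t ht)
    have hF' : HasDerivAt (fun s => F (x s)) ⟪gradient F (x t), x' t⟫ t := by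
      simpa [InnerProductSpace.toDual_apply_apply, Function.comp_def] using hF
    exact ((hF'.sub_const Fs).add ((hx'd t ht).norm_sq.const_mul (1 / 2))).const_add 1
  obtain ⟨M, hM, hUM⟩ := gron_aux U _ (fun t : ℝ => ‖g t‖) t₀ dU
    (fun t ht => lt_of_lt_of_le (by positivity) (hUn t)) hg.norm hint (fun t _ => norm_nonneg _)
    (fun t ht => by
      have htp : 0 < t := lt_of_lt_of_le ht₀ ht
      have hx2 : x'' t = g t - (α / t ^ θ) • x' t - gradient F (x t) := by
        rw [← hode t ht]; abel
      rw [hx2]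
      simp only [inner_sub_right, inner_smul_right]
      rw [real_inner_self_eq_norm_sq, real_inner_comm (gradient F (x t)) (x' t)]
      have h1 : 0 ≤ α / t ^ θ * ‖x' t‖ ^ 2 := by positivity
      have h2 := real_inner_le_norm (x' t) (g t)
      have h3 : ‖x' t‖ ≤ U t := by nlinarith [hUn t, sq_nonneg (‖x' t‖ - 1)]
      have h4 : ‖x' t‖ * ‖g t‖ ≤ U t * ‖g t‖ := by gcongr
      linarith)
  refine ⟨M, hM, fun t ht => ?_⟩
  have := hUM t ht
  simp only [hU] at this
  nlinarith [sq_nonneg ‖x' t‖]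

/-- Quadratic growth on sublevel sets. -/
theorem growth_aux (F : E → ℝ) (Fs : ℝ) (xs : E) (hconv : ConvexOn ℝ Set.univ F)
    (hFs : F xs = Fs) (K ε M : ℝ) (hK : 0 < K) (hε : 0 < ε) (hM : 0 < M)
    (h : ∀ y, ‖y - xs‖ < ε → K * ‖y - xs‖ ^ 2 ≤ F y - Fs) :
    ∃ K' > 0, ∀ y, F y - Fs ≤ M → K' * ‖y - xs‖ ^ 2 ≤ F y - Fs := by
  set ρ := ε / 2 with hρ
  have hρ0 : 0 < ρ := by positivity
  refine ⟨min K (K ^ 2 * ρ ^ 2 / M), lt_min hK (by positivity), fun y hy => ?_⟩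
  by_cases hc : ‖y - xs‖ < ε
  · exact (mul_le_mul_of_nonneg_right (min_le_left _ _) (by positivity)).trans (h y hc)
  · push Not at hc
    have hp : 0 < ‖y - xs‖ := hε.trans_le hc
    set s := ρ / ‖y - xs‖ with hs
    have hs0 : 0 < s := by positivity
    have hs1 : s ≤ 1 := by rw [hs, div_le_one hp]; linarith
    have hz : (1 - s) • xs + s • y - xs = s • (y - xs) := by
      rw [sub_smul, smul_sub, one_smul]; abel
    have hn : ‖(1 - s) • xs + s • y - xs‖ = ρ := by
      rw [hz, norm_smul, Real.norm_of_nonneg hs0.le, hs]; field_simp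
    have h1 := h ((1 - s) • xs + s • y) (by rw [hn]; linarith)
    have h2 := hconv.2 (Set.mem_univ xs) (Set.mem_univ y) (by linarith : 0 ≤ 1 - s) hs0.le (by ring)
    rw [hn] at h1
    simp only [smul_eq_mul, hFs] at h2
    have h3 : K * ρ ^ 2 ≤ s * (F y - Fs) := by nlinarith
    have h4 : K * ρ * ‖y - xs‖ ≤ F y - Fs := by
      have h5 : s * ‖y - xs‖ = ρ := by rw [hs]; field_simp
      have : K * ρ ^ 2 * ‖y - xs‖ ≤ ρ * (F y - Fs) := by
        rw [← h5]
        rw [← h5] at h3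
        nlinarith
      nlinarith
    have h0 : 0 ≤ K * ρ * ‖y - xs‖ := by positivity
    have h6 : (K * ρ * ‖y - xs‖) ^ 2 ≤ M * (F y - Fs) := by nlinarith
    calc _ ≤ (K ^ 2 * ρ ^ 2 / M) * ‖y - xs‖ ^ 2 :=
          mul_le_mul_of_nonneg_right (min_le_right _ _) (by positivity)
      _ = (K * ρ * ‖y - xs‖) ^ 2 / M := by ring
      _ ≤ _ := by rw [div_le_iff₀ hM]; linarith

end aux

theorem stmt_3
    {n : ℕ} (hn : 1 ≤ n)
    (F : EuclideanSpace ℝ (Fin n) → ℝ) (Fstar : ℝ)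
    (Xstar : Set (EuclideanSpace ℝ (Fin n)))
    (hXstar : Xstar = {z | ∀ y, F z ≤ F y})
    (hne : Xstar.Nonempty)
    (hFstar : ∀ z ∈ Xstar, F z = Fstar)
    (hconv : ConvexOn ℝ Set.univ F)
    (hdiff : Differentiable ℝ F)
    (α t₀ θ γ m : ℝ) (hα : 0 < α) (ht₀ : 0 < t₀) (hθ : 0 < θ) (hθ1 : θ < 1)
    (hγ : 1 ≤ γ) (hγ2 : γ ≤ 2) (hm : 0 < m) (hm2 : m < 2 * γ / (γ + 2))
    (Γ : ℝ → ℝ) (hΓ : ∀ t, Γ t = (α / (1 - θ)) * (t ^ (1 - θ) - t₀ ^ (1 - θ)))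
    (g x x' x'' : ℝ → EuclideanSpace ℝ (Fin n))
    (hg : ContinuousOn g (Set.Ici t₀))
    (hx : ∀ t ∈ Set.Ici t₀, HasDerivAt x (x' t) t)
    (hx'd : ∀ t ∈ Set.Ici t₀, HasDerivAt x' (x'' t) t)
    (hx''c : ContinuousOn x'' (Set.Ici t₀))
    (hode : ∀ t ∈ Set.Ici t₀, x'' t + (α / t ^ θ) • x' t + gradient F (x t) = g t)
    (hH1 : ∀ z ∈ Xstar, ∃ η > 0, ∀ y : EuclideanSpace ℝ (Fin n),
      ‖y - z‖ < η → F y - Fstar ≤ (1 / γ) * ⟪gradient F y, y - z⟫)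
    (hH2 : ∀ z ∈ Xstar, ∃ K > 0, ∃ ε > 0, ∀ y : EuclideanSpace ℝ (Fin n),
      ‖y - z‖ < ε → K * Metric.infDist y Xstar ^ (2 : ℝ) ≤ F y - Fstar)
    (xstar : EuclideanSpace ℝ (Fin n)) (huniq : Xstar = {xstar})
    (hint : IntegrableOn (fun t : ℝ => Real.exp (m * Γ t) * ‖g t‖) (Set.Ici t₀)) :
    ∃ C > 0, ∃ t₁ ≥ t₀, ∀ t ≥ t₁,
      F (x t) - Fstar ≤ C * Real.exp (-(m * Γ t)) := by
  have hmem : xstar ∈ Xstar := by rw [huniq]; rfl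
  have hFs : F xstar = Fstar := hFstar _ hmem
  have hmin : ∀ y, Fstar ≤ F y := by
    intro y
    rw [← hFs]
    have := hmem
    rw [hXstar] at this
    exact this y
  have Γ0 : ∀ t ≥ t₀, 0 ≤ Γ t := by
    intro t ht
    rw [hΓ]
    have := Real.rpow_le_rpow ht₀.le ht (by linarith : 0 ≤ 1 - θ)
    have h3 : 0 < 1 - θ := by linarith
    exact mul_nonneg (by positivity) (by linarith)
  have Γc : ContinuousOn Γ (Set.Ici t₀) := by
    have hfun : Γ = fun t => (α / (1 - θ)) * (t ^ (1 - θ) - t₀ ^ (1 - θ)) := funext hΓ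
    rw [hfun]
    have : Continuous fun t : ℝ => t ^ (1 - θ) := Real.continuous_rpow_const (by linarith)
    fun_prop
  -- integrability for smaller exponents
  have hintk : ∀ k, k ≤ m →
      IntegrableOn (fun t : ℝ => Real.exp (k * Γ t) * ‖g t‖) (Set.Ici t₀) := by
    intro k hk
    refine Integrable.mono' hint ?_ ?_
    · exact ((Γc.const_mul k).rexp.mul hg.norm).aestronglyMeasurable measurableSet_Ici
    · filter_upwards [ae_restrict_mem measurableSet_Ici] with t ht
      rw [Real.norm_of_nonneg (by positivity)]
      have := Γ0 t ht
      gcongr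
  obtain ⟨K, hK, ε, hε, hKε⟩ := hH2 xstar hmem
  obtain ⟨η, hη, hηF⟩ := hH1 xstar hmem
  have hKε' : ∀ y, ‖y - xstar‖ < ε → K * ‖y - xstar‖ ^ 2 ≤ F y - Fstar := by
    intro y hy
    have := hKε y hy
    rw [huniq, Metric.infDist_singleton, dist_eq_norm, Real.rpow_two] at this
    exact this
  obtain ⟨M, hM, hbd⟩ := energy_aux F Fstar hdiff hmin α t₀ θ hα ht₀ g x x' x'' hg hx hx'd hode
    (by simpa using hintk 0 hm.le)
  obtain ⟨K', hK', hgr⟩ := growth_aux F Fstar xstar hconv hFs K ε M hK hε hM hKε'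
  have hgrx : ∀ t ≥ t₀, K' * ‖x t - xstar‖ ^ 2 ≤ F (x t) - Fstar := fun t ht => hgr _ (hbd t ht)
  have hk0 : 0 < min m (1 / 2) := lt_min hm (by norm_num)
  obtain ⟨C, hC, t₁, ht₁, hdec⟩ := core_aux F Fstar xstar hdiff α t₀ θ 1 (min m (1 / 2)) hα ht₀ hθ hθ1
    le_rfl (by norm_num) hk0
    (lt_of_le_of_lt (min_le_right _ _) (by norm_num)) Γ hΓ g x x' x'' hg hx hx'd hode K' t₀ hK' le_rfl
    (fun t _ => by
      have := grad_ineq F hconv hdiff (x t) xstar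
      rw [hFs] at this
      linarith) hgrx (hintk _ (min_le_left _ _))
  -- the trajectory converges to the minimizer
  have hΓlim : Filter.Tendsto Γ Filter.atTop Filter.atTop := by
    have hfun : Γ = fun t => (α / (1 - θ)) * (t ^ (1 - θ) - t₀ ^ (1 - θ)) := funext hΓ
    rw [hfun]
    have h3 : 0 < 1 - θ := by linarith
    exact (Filter.tendsto_atTop_add_const_right _ (-(t₀ ^ (1 - θ))) (tendsto_rpow_atTop h3)).const_mul_atTop
      (by positivity : 0 < α / (1 - θ))
  have hexp : Filter.Tendsto (fun t => C * Real.exp (-(min m (1 / 2) * Γ t))) Filter.atTop (nhds 0) := by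
    have := (Real.tendsto_exp_neg_atTop_nhds_zero.comp (hΓlim.const_mul_atTop hk0)).const_mul C
    simpa using this
  obtain ⟨T2, hT2⟩ := Filter.eventually_atTop.1
    (hexp.eventually (gt_mem_nhds (by positivity : 0 < K' * η ^ 2)))
  have hclose : ∀ t ≥ max t₁ T2, ‖x t - xstar‖ < η := by
    intro t ht
    have ha := hdec t ((le_max_left _ _).trans ht)
    have hb := hT2 t ((le_max_right _ _).trans ht)
    have hc := hgrx t (ht₁.le.trans ((le_max_left _ _).trans ht))
    have hd : K' * ‖x t - xstar‖ ^ 2 < K' * η ^ 2 := by linarith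
    exact lt_of_pow_lt_pow_left₀ 2 hη.le (lt_of_mul_lt_mul_left hd hK'.le)
  exact core_aux F Fstar xstar hdiff α t₀ θ γ m hα ht₀ hθ hθ1 hγ hγ2 hm hm2 Γ hΓ g x x' x'' hg hx
    hx'd hode K' (max t₁ T2) hK' (ht₁.le.trans (le_max_left _ _))
    (fun t ht => by
      have := hηF (x t) (hclose t ht)
      have hγ0 : 0 < γ := by linarith
      rw [one_div, ← div_eq_inv_mul, le_div_iff₀ hγ0] at this
      linarith)
    (fun t ht => hgrx t (ht₁.le.trans ((le_max_left _ _).trans ht))) hint
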